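/- Fix δ ∈ (0,1), ε ∈ [0,1), constants σ > 0, λ̲ > 0, λ̄ > 0, integers k ≥ D ≥ 1, and a deterministic matrix A ∈ ℝ^{k×D} with rows a_1,…,a_k ∈ ℝ^D satisfying: (C1) for every c ∈ [−1,1]^k, ‖(1/k)Σ_{i=1}^k c_i a_i‖₂² ≤ σ²D/k; (C2) inf_{‖Δ‖₂=1} (1/k)Σ_{i=1}^k |a_iᵀΔ| ≥ λ̲; (C3) sup_{‖Δ‖₂=1} (1/k)Σ_{i=1}^k |a_iᵀΔ|² ≤ λ̄². There exists a constant c(δ) > 0 depending only on δ such that: if ( λ̄·√((D/k)·log(ek/D)) + ε·σ·√(D/k) ) / ( λ̲·(1−ε) ) ≤ c(δ), then with probability at least 1 − δ over the noise, every minimizer û of u ↦ ‖Θ − A u‖₁ over ℝ^D equals u*. -/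

import Mathlib

open MeasureTheory ProbabilityTheory Real

noncomputable section

def dot {k : ℕ} (x y : Fin k → ℝ) : ℝ := ∑ i, x i * y i

def l2norm {k : ℕ} (x : Fin k → ℝ) : ℝ := Real.sqrt (∑ i, x i ^ 2)

/-- coordinate law `(1−ε)δ₀ + ε Q` of the mixture contamination noise. -/
def mixture (ε : ℝ) (Q : Measure ℝ) : Measure ℝ :=
  ENNReal.ofReal (1 - ε) • Measure.dirac 0 + ENNReal.ofReal ε • Q

/-!
STATEMENT 3 (exact robust ℓ₁ recovery under design conditions (C1)–(C3)):
For every `δ ∈ (0,1)` there is `c(δ) > 0` (depending only on `δ`) such that for any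
`ε ∈ [0,1)`, `σ, λ̲, λ̄ > 0`, integers `k ≥ D ≥ 1`, deterministic `A ∈ ℝ^{k×D}`
(rows `a_i`) satisfying (C1)–(C3), ground truth `u* ∈ ℝ^D`, and noise `z` with
independent coordinates `z_i ∼ (1−ε)δ₀ + ε Q_i`: if
`(λ̄ √((D/k) log(ek/D)) + ε σ √(D/k)) / (λ̲ (1−ε)) ≤ c(δ)`, then with probability
at least `1 − δ` every minimizer `û` of `u ↦ ‖Θ − A u‖₁` (where `Θ = A u* + z`)
equals `u*`.  The noise law is modeled canonically as the product of the
coordinate mixtures.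
-/

/-!
The loss `u ↦ ‖Θ - A u‖₁` is convex, so `u*` is its only minimizer once its one-sided derivative
at `u*` is positive in every unit direction `Δ`. That derivative is
`∑ i, (1{z i = 0} |⟪a i, Δ⟫| - sign (z i) ⟪a i, Δ⟫)`. By (C2) the mean of the first part is at
least `(1 - ε) k λ̲`, and by (C1) the mean of the second is at most `ε σ k √(D / k)`, the signs
having mean at most `ε`. Both fluctuations are at most a multiple of
`√(∑ i, ‖a i‖²) ≤ k λ̄ √(D / k)` in expectation, uniformly in `Δ`: the sign part by Cauchy-Schwarz
and orthogonality, and the other part after symmetrizing and removing the absolute values one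
coordinate at a time (contraction). Markov's inequality concludes.
-/

section FiniteSup

variable {Ω J : Type*} {mΩ : MeasurableSpace Ω} {P : Measure Ω} [Finite J]

lemma integrable_ciSup_of_finite {f : J → Ω → ℝ} (hf : ∀ j, Integrable (f j) P) :
    Integrable (fun ω ↦ ⨆ j, f j ω) P := by
  cases nonempty_fintype J
  refine (integrable_finsetSum Finset.univ fun j _ ↦ (hf j).abs).mono'
    (AEMeasurable.iSup fun j ↦ (hf j).aemeasurable).aestronglyMeasurable (.of_forall fun ω ↦ ?_)
  rcases isEmpty_or_nonempty J with hJ | hJ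
  · simp
  · obtain ⟨j, hj⟩ := exists_eq_ciSup_of_finite (f := fun j ↦ f j ω)
    rw [← hj]
    exact Finset.single_le_sum (f := fun j ↦ |f j ω|) (fun _ _ ↦ abs_nonneg _) (Finset.mem_univ j)

lemma integral_ciSup_le_integral_prod_ciSup_sub [Nonempty J] [IsProbabilityMeasure P]
    {f : J → Ω → ℝ} (hf : ∀ j, Integrable (f j) P) (hf0 : ∀ j, ∫ ω, f j ω ∂P = 0) :
    ∫ ω, ⨆ j, f j ω ∂P ≤ ∫ p : Ω × Ω, ⨆ j, (f j p.1 - f j p.2) ∂P.prod P := by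
  have hint : Integrable (fun p : Ω × Ω ↦ ⨆ j, (f j p.1 - f j p.2)) (P.prod P) :=
    integrable_ciSup_of_finite fun j ↦ ((hf j).comp_fst P).sub ((hf j).comp_snd P)
  rw [integral_prod _ hint]
  refine integral_mono (integrable_ciSup_of_finite hf) hint.integral_prod_left fun x ↦
    ciSup_le fun j ↦ ?_
  have hsub : ∀ j, Integrable (fun y ↦ f j x - f j y) P := fun j ↦
    (integrable_const _).sub (hf j)
  calc f j x = ∫ y, (f j x - f j y) ∂P := by
        rw [integral_sub (integrable_const _) (hf j), hf0 j]; simp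
    _ ≤ ∫ y, ⨆ j, (f j x - f j y) ∂P :=
        integral_mono (hsub j) (integrable_ciSup_of_finite hsub) fun y ↦
          le_ciSup (f := fun j ↦ f j x - f j y) (Set.finite_range _).bddAbove j

lemma ciSup_mul_abs_add_ciSup_neg_mul_abs_le (x : ℝ) (τ h : J → ℝ) :
    (⨆ j, (x * |τ j| + h j)) + ⨆ j, (-x * |τ j| + h j) ≤
      (⨆ j, (x * τ j + h j)) + ⨆ j, (-x * τ j + h j) := by
  rcases isEmpty_or_nonempty J with hJ | hJ
  · simp
  obtain ⟨j, hj⟩ := exists_eq_ciSup_of_finite (f := fun j ↦ x * |τ j| + h j)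
  obtain ⟨l, hl⟩ := exists_eq_ciSup_of_finite (f := fun j ↦ -x * |τ j| + h j)
  have hpos (i : J) : x * τ i + h i ≤ ⨆ j, (x * τ j + h j) :=
    le_ciSup (Set.finite_range fun j ↦ x * τ j + h j).bddAbove i
  have hneg (i : J) : -x * τ i + h i ≤ ⨆ j, (-x * τ j + h j) :=
    le_ciSup (Set.finite_range fun j ↦ -x * τ j + h j).bddAbove i
  have hcontr : x * |τ j| - x * |τ l| ≤ |x * τ j - x * τ l| := by
    rw [← mul_sub, ← mul_sub, abs_mul]
    exact (le_abs_self _).trans ((abs_mul _ _).trans_le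
      (mul_le_mul_of_nonneg_left (abs_abs_sub_abs_le _ _) (abs_nonneg x)))
  rw [← hj, ← hl]
  rcases abs_cases (x * τ j - x * τ l) with h' | h' <;>
    linarith [hpos j, hpos l, hneg j, hneg l]

end FiniteSup

section Contraction

lemma sum_update_mul_update {ι : Type*} [Fintype ι] [DecidableEq ι] (x s : ι → ℝ) (i : ι)
    (a b : ℝ) :
    ∑ l, Function.update x i a l * Function.update s i b l = a * b + ∑ l ∈ {i}ᶜ, x l * s l := by
  rw [Fintype.sum_eq_add_sum_compl i, Function.update_self, Function.update_self]
  congr 1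
  refine Finset.sum_congr rfl fun l hl ↦ ?_
  have hli : l ≠ i := by simpa using hl
  rw [Function.update_of_ne hli, Function.update_of_ne hli]

variable {Ω ι J : Type*} {mΩ : MeasurableSpace Ω} {P : Measure Ω} [Fintype ι] [DecidableEq ι]
  [Finite J] {X : Ω → ι → ℝ}

lemma integral_ciSup_sum_mul_update_abs_le {i : ι}
    (hflip : IdentDistrib (fun ω ↦ Function.update (X ω) i (-X ω i)) X P P)
    (hX : ∀ i, Integrable (fun ω ↦ X ω i) P) (t : J → ι → ℝ) :
    ∫ ω, ⨆ j, ∑ l, X ω l * Function.update (t j) i |t j i| l ∂P ≤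
      ∫ ω, ⨆ j, ∑ l, X ω l * t j l ∂P := by
  have hmeas (s : J → ι → ℝ) : Measurable fun x : ι → ℝ ↦ ⨆ j, ∑ l, x l * s j l :=
    Measurable.iSup fun j ↦ by fun_prop
  have hint (s : J → ι → ℝ) : Integrable (fun ω ↦ ⨆ j, ∑ l, X ω l * s j l) P :=
    integrable_ciSup_of_finite fun j ↦ integrable_finsetSum _ fun l _ ↦ (hX l).mul_const _
  have hint_flip (s : J → ι → ℝ) : Integrable
      (fun ω ↦ ⨆ j, ∑ l, Function.update (X ω) i (-X ω i) l * s j l) P :=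
    (hflip.comp (hmeas s)).integrable_iff.2 (hint s)
  have hsymm (s : J → ι → ℝ) : 2 * ∫ ω, ⨆ j, ∑ l, X ω l * s j l ∂P =
      ∫ ω, ((⨆ j, ∑ l, X ω l * s j l) +
        ⨆ j, ∑ l, Function.update (X ω) i (-X ω i) l * s j l) ∂P := by
    rw [integral_add (hint s) (hint_flip s), two_mul]
    exact congrArg _ (hflip.comp (hmeas s)).integral_eq.symm
  refine le_of_mul_le_mul_left ?_ (two_pos (α := ℝ))
  rw [hsymm, hsymm]
  refine integral_mono ((hint _).add (hint_flip _)) ((hint _).add (hint_flip _)) fun ω ↦ ?_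
  simpa only [← sum_update_mul_update, Function.update_eq_self] using
    ciSup_mul_abs_add_ciSup_neg_mul_abs_le (X ω i) (fun j ↦ t j i)
      fun j ↦ ∑ l ∈ {i}ᶜ, X ω l * t j l

theorem integral_ciSup_sum_mul_abs_le
    (hflip : ∀ i, IdentDistrib (fun ω ↦ Function.update (X ω) i (-X ω i)) X P P)
    (hX : ∀ i, Integrable (fun ω ↦ X ω i) P) (t : J → ι → ℝ) :
    ∫ ω, ⨆ j, ∑ i, X ω i * |t j i| ∂P ≤ ∫ ω, ⨆ j, ∑ i, X ω i * t j i ∂P := by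
  suffices h : ∀ T : Finset ι, ∫ ω, ⨆ j, ∑ i, X ω i * T.piecewise |t j| (t j) i ∂P ≤
      ∫ ω, ⨆ j, ∑ i, X ω i * t j i ∂P by
    simpa using h Finset.univ
  intro T
  induction T using Finset.induction_on with
  | empty => simp
  | insert i T hi ih =>
    refine le_trans ?_ ih
    simpa [Finset.piecewise_insert, hi] using
      integral_ciSup_sum_mul_update_abs_le (hflip i) hX fun j ↦ T.piecewise |t j| (t j)

end Contraction

section Independent

variable {Ω ι : Type*} [MeasurableSpace Ω] [Fintype ι]

lemma measurePreserving_swap_eval [DecidableEq ι] (μ : ι → Measure Ω) [∀ i, SigmaFinite (μ i)]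
    (i : ι) :
    MeasurePreserving
      (fun p : (ι → Ω) × (ι → Ω) ↦
        (Function.update p.1 i (p.2 i), Function.update p.2 i (p.1 i)))
      ((Measure.pi μ).prod (Measure.pi μ)) ((Measure.pi μ).prod (Measure.pi μ)) := by
  have he := measurePreserving_arrowProdEquivProdArrow Ω Ω ι μ μ
  have hswap : MeasurePreserving (fun (q : ι → Ω × Ω) l ↦ (if l = i then Prod.swap else id) (q l))
      (Measure.pi fun l ↦ (μ l).prod (μ l)) (Measure.pi fun l ↦ (μ l).prod (μ l)) := by
    refine measurePreserving_pi _ _ fun l ↦ ?_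
    split_ifs
    exacts [Measure.measurePreserving_swap, .id _]
  convert he.comp (hswap.comp he.symm) using 1
  funext p
  ext l <;> by_cases hl : l = i <;>
    simp [hl, MeasurableEquiv.arrowProdEquivProdArrow, Equiv.arrowProdEquivProdArrow]

lemma identDistrib_update_neg_sub [DecidableEq ι] (μ : ι → Measure Ω)
    [∀ i, SigmaFinite (μ i)] {ξ : ι → Ω → ℝ} (hξ : ∀ i, Measurable (ξ i)) (i : ι) :
    let X : (ι → Ω) × (ι → Ω) → ι → ℝ := fun p l ↦ ξ l (p.1 l) - ξ l (p.2 l)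
    IdentDistrib (fun p ↦ Function.update (X p) i (-X p i)) X
      ((Measure.pi μ).prod (Measure.pi μ)) ((Measure.pi μ).prod (Measure.pi μ)) := by
  intro X
  have hX : Measurable X := by fun_prop
  have hθ := measurePreserving_swap_eval μ i
  have hcomp : (fun p ↦ Function.update (X p) i (-X p i)) = X ∘ fun p ↦
      (Function.update p.1 i (p.2 i), Function.update p.2 i (p.1 i)) := by
    funext p l
    by_cases hl : l = i
    · subst hl; simp [X]
    · simp [X, hl]
  rw [hcomp]
  exact ⟨(hX.comp hθ.measurable).aemeasurable, hX.aemeasurable,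
    by rw [← Measure.map_map hX hθ.measurable, hθ.map_eq]⟩

variable {J : Type*} [Finite J] [Nonempty J] {μ : ι → Measure Ω}
  [∀ i, IsProbabilityMeasure (μ i)]

theorem integral_ciSup_sum_mul_abs_le_integral_prod {ξ : ι → Ω → ℝ}
    (hmeas : ∀ i, Measurable (ξ i)) (hint : ∀ i, Integrable (ξ i) (μ i))
    (hmean : ∀ i, ∫ x, ξ i x ∂μ i = 0) (t : J → ι → ℝ) :
    ∫ z, ⨆ j, ∑ i, ξ i (z i) * |t j i| ∂Measure.pi μ ≤
      ∫ p : (ι → Ω) × (ι → Ω), ⨆ j, ∑ i, (ξ i (p.1 i) - ξ i (p.2 i)) * t j i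
        ∂(Measure.pi μ).prod (Measure.pi μ) := by
  classical
  have hterm (c : ℝ) (i : ι) : Integrable (fun z : ι → Ω ↦ ξ i (z i) * c) (Measure.pi μ) :=
    (integrable_comp_eval (hint i)).mul_const c
  have hsum (j : J) : ∫ z : ι → Ω, ∑ i, ξ i (z i) * |t j i| ∂Measure.pi μ = 0 := by
    rw [integral_finsetSum _ fun i _ ↦ hterm _ i]
    refine Finset.sum_eq_zero fun i _ ↦ ?_
    rw [integral_mul_const, integral_comp_eval (hint i).aestronglyMeasurable, hmean, zero_mul]
  calc ∫ z, ⨆ j, ∑ i, ξ i (z i) * |t j i| ∂Measure.pi μ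
      ≤ ∫ p : (ι → Ω) × (ι → Ω), ⨆ j, ∑ i, (ξ i (p.1 i) - ξ i (p.2 i)) * |t j i|
          ∂(Measure.pi μ).prod (Measure.pi μ) := by
        simpa only [← Finset.sum_sub_distrib, ← sub_mul] using
          integral_ciSup_le_integral_prod_ciSup_sub
            (fun j ↦ integrable_finsetSum _ fun i _ ↦ hterm |t j i| i) hsum
    _ ≤ _ := integral_ciSup_sum_mul_abs_le (identDistrib_update_neg_sub μ hmeas)
        (fun i ↦ ((integrable_comp_eval (hint i)).comp_fst _).sub
          ((integrable_comp_eval (hint i)).comp_snd _)) t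

end Independent

section Hilbert

open scoped InnerProductSpace

variable {Ω ι E : Type*} {mΩ : MeasurableSpace Ω} {P : Measure Ω} [Fintype ι]
  [NormedAddCommGroup E] [InnerProductSpace ℝ E]

lemma integral_norm_sq_sum_smul {X : ι → Ω → ℝ} (hX : ∀ i, MemLp (X i) 2 P)
    (horth : Pairwise fun i j ↦ ∫ ω, X i ω * X j ω ∂P = 0) (a : ι → E) :
    ∫ ω, ‖∑ i, X i ω • a i‖ ^ 2 ∂P = ∑ i, (∫ ω, X i ω ^ 2 ∂P) * ‖a i‖ ^ 2 := by
  classical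
  have hint (i j : ι) : Integrable (fun ω ↦ X i ω * X j ω * ⟪a i, a j⟫_ℝ) P :=
    ((hX i).integrable_mul (hX j)).mul_const _
  have hexpand (ω : Ω) :
      ‖∑ i, X i ω • a i‖ ^ 2 = ∑ i, ∑ j, X i ω * X j ω * ⟪a i, a j⟫_ℝ := by
    rw [← real_inner_self_eq_norm_sq, sum_inner]
    simp only [inner_sum, real_inner_smul_left, real_inner_smul_right]
    exact Finset.sum_congr rfl fun i _ ↦ Finset.sum_congr rfl fun j _ ↦ by ring
  simp only [hexpand]
  rw [integral_finsetSum _ fun i _ ↦ integrable_finsetSum _ fun j _ ↦ hint i j]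
  refine Finset.sum_congr rfl fun i _ ↦ ?_
  rw [integral_finsetSum _ fun j _ ↦ hint i j, Finset.sum_eq_single i]
  · simp only [integral_mul_const, real_inner_self_eq_norm_sq, sq]
  · intro j _ hji
    rw [integral_mul_const, horth hji.symm, zero_mul]
  · simp

lemma integral_norm_sum_smul_le [IsProbabilityMeasure P] {X : ι → Ω → ℝ}
    (hX : ∀ i, MemLp (X i) 2 P) (horth : Pairwise fun i j ↦ ∫ ω, X i ω * X j ω ∂P = 0)
    (hsq : ∀ i, ∫ ω, X i ω ^ 2 ∂P ≤ 1) (a : ι → E) :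
    ∫ ω, ‖∑ i, X i ω • a i‖ ∂P ≤ √(∑ i, ‖a i‖ ^ 2) := by
  have hmem : MemLp (fun ω ↦ ‖∑ i, X i ω • a i‖) 2 P :=
    (memLp_finsetSum _ fun i _ ↦ (memLp_top_const (a i)).smul (hX i)).norm
  have hjensen : (∫ ω, ‖∑ i, X i ω • a i‖ ∂P) ^ 2 ≤ ∫ ω, ‖∑ i, X i ω • a i‖ ^ 2 ∂P := by
    have hvar := variance_nonneg (fun ω ↦ ‖∑ i, X i ω • a i‖) P
    rw [variance_eq_sub hmem] at hvar
    exact sub_nonneg.1 hvar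
  refine Real.le_sqrt_of_sq_le (hjensen.trans ?_)
  rw [integral_norm_sq_sum_smul hX horth]
  exact Finset.sum_le_sum fun i _ ↦ mul_le_of_le_one_left (sq_nonneg _) (hsq i)

variable {μ : ι → Measure Ω} [∀ i, IsProbabilityMeasure (μ i)] {ξ : ι → Ω → ℝ}

lemma integral_norm_sum_eval_smul_le (hξ : ∀ i, MemLp (ξ i) 2 (μ i))
    (hmean : ∀ i, ∫ x, ξ i x ∂μ i = 0) (hsq : ∀ i, ∫ x, ξ i x ^ 2 ∂μ i ≤ 1) (a : ι → E) :
    ∫ z, ‖∑ i, ξ i (z i) • a i‖ ∂Measure.pi μ ≤ √(∑ i, ‖a i‖ ^ 2) := by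
  have hmem (i : ι) : MemLp (fun z : ι → Ω ↦ ξ i (z i)) 2 (Measure.pi μ) :=
    (hξ i).comp_measurePreserving (measurePreserving_eval μ i)
  have hindep := iIndepFun_pi fun i ↦ (hξ i).aemeasurable
  refine integral_norm_sum_smul_le hmem (fun i j hij ↦ ?_) (fun i ↦ ?_) a
  · have hmul := (hindep.indepFun hij).integral_fun_mul_eq_mul_integral (hmem i).1 (hmem j).1
    exact hmul.trans (by rw [integral_comp_eval (hξ i).1, hmean, zero_mul])
  · exact (integral_comp_eval (μ := μ) (f := fun x ↦ ξ i x ^ 2) ((hξ i).1.pow 2)).trans_le (hsq i)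

lemma integral_ciSup_sum_eval_mul_abs_inner_le {J : Type*} [Finite J] [Nonempty J]
    (hmeas : ∀ i, Measurable (ξ i)) (hξ : ∀ i, MemLp (ξ i) 2 (μ i))
    (hmean : ∀ i, ∫ x, ξ i x ∂μ i = 0) (hsq : ∀ i, ∫ x, ξ i x ^ 2 ∂μ i ≤ 1) (a : ι → E)
    {d : J → E} (hd : ∀ j, ‖d j‖ ≤ 1) :
    ∫ z, ⨆ j, ∑ i, ξ i (z i) * |⟪a i, d j⟫_ℝ| ∂Measure.pi μ ≤ 2 * √(∑ i, ‖a i‖ ^ 2) := by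
  have hint (i : ι) : Integrable (ξ i) (μ i) := (hξ i).integrable one_le_two
  have hdiff (i : ι) : Integrable (fun p : (ι → Ω) × (ι → Ω) ↦ ξ i (p.1 i) - ξ i (p.2 i))
      ((Measure.pi μ).prod (Measure.pi μ)) :=
    ((integrable_comp_eval (hint i)).comp_fst _).sub ((integrable_comp_eval (hint i)).comp_snd _)
  set N : (ι → Ω) → ℝ := fun z ↦ ‖∑ i, ξ i (z i) • a i‖
  have hN : Integrable N (Measure.pi μ) :=
    (integrable_finsetSum _ fun i _ ↦ (integrable_comp_eval (hint i)).smul_const (a i)).norm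
  have hsup (p : (ι → Ω) × (ι → Ω)) :
      ⨆ j, ∑ i, (ξ i (p.1 i) - ξ i (p.2 i)) * ⟪a i, d j⟫_ℝ ≤ N p.1 + N p.2 := by
    refine ciSup_le fun j ↦ ?_
    calc ∑ i, (ξ i (p.1 i) - ξ i (p.2 i)) * ⟪a i, d j⟫_ℝ
        = ⟪∑ i, ξ i (p.1 i) • a i - ∑ i, ξ i (p.2 i) • a i, d j⟫_ℝ := by
          simp only [← Finset.sum_sub_distrib, ← sub_smul, sum_inner, real_inner_smul_left]
      _ ≤ ‖∑ i, ξ i (p.1 i) • a i - ∑ i, ξ i (p.2 i) • a i‖ :=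
          (real_inner_le_norm _ _).trans (mul_le_of_le_one_right (norm_nonneg _) (hd j))
      _ ≤ N p.1 + N p.2 := norm_sub_le _ _
  calc ∫ z, ⨆ j, ∑ i, ξ i (z i) * |⟪a i, d j⟫_ℝ| ∂Measure.pi μ
      ≤ ∫ p : (ι → Ω) × (ι → Ω), ⨆ j, ∑ i, (ξ i (p.1 i) - ξ i (p.2 i)) * ⟪a i, d j⟫_ℝ
          ∂(Measure.pi μ).prod (Measure.pi μ) :=
        integral_ciSup_sum_mul_abs_le_integral_prod hmeas hint hmean _
    _ ≤ ∫ p : (ι → Ω) × (ι → Ω), (N p.1 + N p.2) ∂(Measure.pi μ).prod (Measure.pi μ) :=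
        integral_mono (integrable_ciSup_of_finite fun j ↦
            integrable_finsetSum _ fun i _ ↦ (hdiff i).mul_const _)
          ((hN.comp_fst _).add (hN.comp_snd _)) hsup
    _ = 2 * ∫ z, N z ∂Measure.pi μ := by
        rw [integral_add (hN.comp_fst _) (hN.comp_snd _), integral_fun_fst,
          integral_fun_snd, probReal_univ, one_smul, two_mul]
    _ ≤ 2 * √(∑ i, ‖a i‖ ^ 2) := by
        gcongr
        exact integral_norm_sum_eval_smul_le hξ hmean hsq a

end Hilbert

section Centering

variable {Ω : Type*} {mΩ : MeasurableSpace Ω} {P : Measure Ω} {f : Ω → ℝ}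

lemma memLp_of_abs_le_one [IsFiniteMeasure P] {p : ENNReal} (hf : Measurable f)
    (hf1 : ∀ x, |f x| ≤ 1) : MemLp f p P :=
  .of_bound hf.aestronglyMeasurable 1 (.of_forall hf1)

variable [IsProbabilityMeasure P]

lemma integral_sub_integral_self (f : Ω → ℝ) : ∫ x, (f x - ∫ y, f y ∂P) ∂P = 0 := by
  simpa only [average_eq_integral] using integral_sub_average P f

lemma integral_sub_integral_sq_le_one (hf : Measurable f) (hf1 : ∀ x, |f x| ≤ 1) :
    ∫ x, (f x - ∫ y, f y ∂P) ^ 2 ∂P ≤ 1 :=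
  calc ∫ x, (f x - ∫ y, f y ∂P) ^ 2 ∂P = variance f P := (variance_eq_integral hf.aemeasurable).symm
    _ ≤ ∫ x, f x ^ 2 ∂P := variance_le_expectation_sq hf.aestronglyMeasurable
    _ ≤ ∫ _, 1 ∂P := integral_mono (memLp_of_abs_le_one hf hf1).integrable_sq
        (integrable_const 1) fun x ↦ (sq_le_one_iff_abs_le_one _).2 (hf1 x)
    _ = 1 := by simp

end Centering

section DirectionalDerivative

open scoped InnerProductSpace

variable {ι E : Type*} [Fintype ι] [NormedAddCommGroup E] [InnerProductSpace ℝ E]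

/-- The one-sided derivative at `0`, in the direction `v`, of the `ℓ₁` loss
`v ↦ ∑ i, |z i - ⟪a i, v⟫|`. -/
def l1DirDeriv (a : ι → E) (z : ι → ℝ) (v : E) : ℝ :=
  ∑ i, (Set.indicator {0} 1 (z i) * |⟪a i, v⟫_ℝ| - SignType.sign (z i) * ⟪a i, v⟫_ℝ)

lemma abs_add_indicator_mul_abs_sub_sign_mul_le (z x : ℝ) :
    |z| + (Set.indicator {0} 1 z * |x| - SignType.sign z * x) ≤ |z - x| := by
  rcases lt_trichotomy z 0 with hz | rfl | hz
  · simp only [Set.indicator_of_notMem (Set.notMem_singleton_iff.2 hz.ne), sign_neg hz,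
      abs_of_neg hz, SignType.coe_neg_one]
    linarith [neg_le_abs (z - x)]
  · simp
  · simp only [Set.indicator_of_notMem (Set.notMem_singleton_iff.2 hz.ne'), sign_pos hz,
      abs_of_pos hz, SignType.coe_one]
    linarith [le_abs_self (z - x)]

lemma sum_abs_add_l1DirDeriv_le (a : ι → E) (z : ι → ℝ) (v : E) :
    ∑ i, |z i| + l1DirDeriv a z v ≤ ∑ i, |z i - ⟪a i, v⟫_ℝ| := by
  rw [l1DirDeriv, ← Finset.sum_add_distrib]
  exact Finset.sum_le_sum fun i _ ↦ abs_add_indicator_mul_abs_sub_sign_mul_le _ _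

lemma l1DirDeriv_smul (a : ι → E) (z : ι → ℝ) {c : ℝ} (hc : 0 ≤ c) (v : E) :
    l1DirDeriv a z (c • v) = c * l1DirDeriv a z v := by
  simp only [l1DirDeriv, Finset.mul_sum, real_inner_smul_right, abs_mul, abs_of_nonneg hc]
  exact Finset.sum_congr rfl fun i _ ↦ by ring

lemma eq_zero_of_sum_abs_sub_inner_le {a : ι → E} {z : ι → ℝ}
    (hpos : ∀ Δ, ‖Δ‖ = 1 → 0 < l1DirDeriv a z Δ) {v : E}
    (hv : ∑ i, |z i - ⟪a i, v⟫_ℝ| ≤ ∑ i, |z i|) : v = 0 := by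
  by_contra hv0
  have hderiv : l1DirDeriv a z (‖v‖⁻¹ • v) ≤ 0 := by
    rw [l1DirDeriv_smul a z (inv_nonneg.2 (norm_nonneg v))]
    exact mul_nonpos_of_nonneg_of_nonpos (inv_nonneg.2 (norm_nonneg v))
      (by linarith [sum_abs_add_l1DirDeriv_le a z v])
  exact (hpos _ (norm_smul_inv_norm (𝕜 := ℝ) hv0)).not_ge hderiv

lemma l1DirDeriv_congr_sign {z w : ι → ℝ}
    (h : ∀ i, SignType.sign (z i) = SignType.sign (w i)) (a : ι → E) (v : E) :
    l1DirDeriv a z v = l1DirDeriv a w v := by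
  have hzero (i : ι) : z i = 0 ↔ w i = 0 := by
    rw [← _root_.sign_eq_zero_iff, h, _root_.sign_eq_zero_iff]
  simp only [l1DirDeriv, h, Set.indicator, Set.mem_singleton_iff, hzero, Pi.one_apply]

-- The derivative depends on `z` only through its signs: one direction per sign pattern is enough.
lemma exists_finite_set_of_l1DirDeriv_nonpos (a : ι → E) :
    ∃ F : Set E, F.Finite ∧ ∀ z Δ, ‖Δ‖ = 1 → l1DirDeriv a z Δ ≤ 0 →
      ∃ Δ' ∈ F, ‖Δ'‖ = 1 ∧ l1DirDeriv a z Δ' ≤ 0 := by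
  have hpattern (s : ι → SignType) : ∃ Δ' : E, ∀ z, (∀ i, SignType.sign (z i) = s i) →
      ∀ Δ, ‖Δ‖ = 1 → l1DirDeriv a z Δ ≤ 0 → ‖Δ'‖ = 1 ∧ l1DirDeriv a z Δ' ≤ 0 := by
    by_cases hs : ∃ z Δ, (∀ i, SignType.sign (z i) = s i) ∧ ‖Δ‖ = 1 ∧ l1DirDeriv a z Δ ≤ 0
    · obtain ⟨w, Δ', hw, hnorm, hle⟩ := hs
      refine ⟨Δ', fun z hz _ _ _ ↦ ⟨hnorm, ?_⟩⟩
      rwa [l1DirDeriv_congr_sign fun i ↦ (hz i).trans (hw i).symm]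
    · exact ⟨0, fun z hz Δ hΔ hle ↦ (hs ⟨z, Δ, hz, hΔ, hle⟩).elim⟩
  choose d hd using hpattern
  exact ⟨Set.range d, Set.finite_range d, fun z Δ hΔ hle ↦
    ⟨_, Set.mem_range_self _, hd _ z (fun _ ↦ rfl) Δ hΔ hle⟩⟩

lemma le_deviation_of_l1DirDeriv_nonpos {a : ι → E} {z : ι → ℝ} {Δ : E} (hΔ : ‖Δ‖ = 1)
    (hle : l1DirDeriv a z Δ ≤ 0) {p m : ι → ℝ} {q L B : ℝ} (hq : 0 ≤ q) (hp : ∀ i, q ≤ p i)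
    (hL : L ≤ ∑ i, |⟪a i, Δ⟫_ℝ|) (hB : ‖∑ i, m i • a i‖ ≤ B) :
    q * L - B ≤ ∑ i, (p i - Set.indicator {0} 1 (z i)) * |⟪a i, Δ⟫_ℝ| +
      ‖∑ i, (SignType.sign (z i) - m i) • a i‖ := by
  have hinner (c : ι → ℝ) : ∑ i, c i * ⟪a i, Δ⟫_ℝ ≤ ‖∑ i, c i • a i‖ := by
    simpa only [sum_inner, real_inner_smul_left, hΔ, mul_one] using
      real_inner_le_norm (∑ i, c i • a i) Δ
  have hatom : q * L ≤ ∑ i, p i * |⟪a i, Δ⟫_ℝ| := by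
    refine (mul_le_mul_of_nonneg_left hL hq).trans ?_
    rw [Finset.mul_sum]
    gcongr with i
    exact hp i
  have hsplit : ∑ i, (p i - Set.indicator {0} 1 (z i)) * |⟪a i, Δ⟫_ℝ| +
      ∑ i, (SignType.sign (z i) - m i) * ⟪a i, Δ⟫_ℝ =
        ∑ i, p i * |⟪a i, Δ⟫_ℝ| - ∑ i, m i * ⟪a i, Δ⟫_ℝ - l1DirDeriv a z Δ := by
    simp only [l1DirDeriv, ← Finset.sum_add_distrib, ← Finset.sum_sub_distrib]
    exact Finset.sum_congr rfl fun i _ ↦ by ring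
  linarith [hinner m, hinner fun i ↦ SignType.sign (z i) - m i]

end DirectionalDerivative

section Recovery

open scoped InnerProductSpace

variable {ι E : Type*} [Fintype ι] [NormedAddCommGroup E] [InnerProductSpace ℝ E]

lemma norm_sum_smul_le_mul_of_abs_le {a : ι → E} {S : ℝ}
    (hS : ∀ c : ι → ℝ, (∀ i, |c i| ≤ 1) → ‖∑ i, c i • a i‖ ≤ S) {ε : ℝ} (hε : 0 ≤ ε)
    {m : ι → ℝ} (hm : ∀ i, |m i| ≤ ε) : ‖∑ i, m i • a i‖ ≤ ε * S := by
  have hcancel (i : ι) : m i = ε * (m i / ε) := by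
    rcases hε.eq_or_lt with rfl | hε
    · simpa using hm i
    · exact (mul_div_cancel₀ _ hε.ne').symm
  have hunit (i : ι) : |m i / ε| ≤ 1 := by
    rw [abs_div, abs_of_nonneg hε]
    exact div_le_one_of_le₀ (hm i) hε
  calc ‖∑ i, m i • a i‖ = ‖∑ i, (ε * (m i / ε)) • a i‖ := by simp only [← hcancel]
    _ = ε * ‖∑ i, (m i / ε) • a i‖ := by
      simp only [mul_smul, ← Finset.smul_sum, norm_smul, Real.norm_of_nonneg hε]
    _ ≤ ε * S := mul_le_mul_of_nonneg_left (hS _ hunit) hε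

lemma measurable_sign_coe : Measurable fun x : ℝ ↦ (SignType.sign x : ℝ) := by
  have h : (fun x : ℝ ↦ (SignType.sign x : ℝ)) =
      fun x ↦ if 0 < x then 1 else if x < 0 then -1 else 0 := by
    funext x
    rw [sign_apply]
    split_ifs <;> simp
  rw [h]
  exact Measurable.ite measurableSet_Ioi measurable_const
    (Measurable.ite measurableSet_Iio measurable_const measurable_const)

lemma abs_sign_coe_le_one (x : ℝ) : |(SignType.sign x : ℝ)| ≤ 1 := by
  rcases lt_trichotomy x 0 with hx | rfl | hx <;> simp [*]

lemma abs_integral_sign_le {P : Measure ℝ} [IsProbabilityMeasure P] :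
    |∫ x, (SignType.sign x : ℝ) ∂P| ≤ 1 - P.real {0} := by
  have hcompl : ∀ x ∉ ({0}ᶜ : Set ℝ), (SignType.sign x : ℝ) = 0 := by simp
  rw [← setIntegral_eq_integral_of_forall_compl_eq_zero hcompl,
    ← probReal_compl_eq_one_sub (measurableSet_singleton 0)]
  simpa using norm_setIntegral_le_of_norm_le_const (μ := P) (measure_lt_top _ _)
    fun x _ ↦ (Real.norm_eq_abs _).trans_le (abs_sign_coe_le_one x)

lemma ofReal_one_sub_div_le_measure_of_le_integral {Ω : Type*} {mΩ : MeasurableSpace Ω}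
    {P : Measure Ω} [IsProbabilityMeasure P] {G : Ω → ℝ} (hG : Integrable G P) (hG0 : 0 ≤ G)
    {s : Set Ω} {g M : ℝ} (hg : 0 < g) (hM : ∫ ω, G ω ∂P ≤ M) (hs : ∀ ω ∉ s, g ≤ G ω) :
    ENNReal.ofReal (1 - M / g) ≤ P s := by
  have hmarkov : P.real sᶜ ≤ M / g := by
    rw [le_div_iff₀' hg]
    calc g * P.real sᶜ ≤ g * P.real {ω | g ≤ G ω} := 
        mul_le_mul_of_nonneg_left (measureReal_mono hs) hg.le
      _ ≤ ∫ ω, G ω ∂P := mul_meas_ge_le_integral_of_nonneg (.of_forall hG0) hG g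
      _ ≤ M := hM
  rw [ENNReal.ofReal_sub _ (measureReal_nonneg.trans hmarkov), ENNReal.ofReal_one,
    tsub_le_iff_right]
  calc (1 : ENNReal) = P Set.univ := measure_univ.symm
    _ ≤ P s + P sᶜ := measure_univ_le_add_compl s
    _ ≤ P s + ENNReal.ofReal (M / g) := by
      gcongr
      exact (ofReal_measureReal (μ := P)).symm.trans_le (ENNReal.ofReal_le_ofReal hmarkov)

variable {μ : ι → Measure ℝ} [∀ i, IsProbabilityMeasure (μ i)]

lemma integrable_ciSup_atom_deviation (a : ι → E) {J : Type*} [Finite J] (d : J → E) :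
    Integrable (fun z : ι → ℝ ↦ ⨆ j, ∑ i,
      ((μ i).real {0} - Set.indicator {0} 1 (z i)) * |⟪a i, d j⟫_ℝ|) (Measure.pi μ) :=
  integrable_ciSup_of_finite fun _ ↦ integrable_finsetSum _ fun _ _ ↦
    ((integrable_const _).sub (integrable_comp_eval (f := Set.indicator {0} 1)
      ((integrable_const 1).indicator (measurableSet_singleton 0)))).mul_const _

lemma integral_ciSup_atom_deviation_le (a : ι → E) {J : Type*} [Finite J] [Nonempty J]
    {d : J → E} (hd : ∀ j, ‖d j‖ ≤ 1) :
    ∫ z, ⨆ j, ∑ i, ((μ i).real {0} - Set.indicator {0} 1 (z i)) * |⟪a i, d j⟫_ℝ| ∂Measure.pi μ ≤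
      2 * √(∑ i, ‖a i‖ ^ 2) := by
  let f : ℝ → ℝ := fun x ↦ -Set.indicator {0} 1 x
  have hf : Measurable f :=
    (measurable_one.indicator (measurableSet_singleton 0)).neg
  have hf1 (x : ℝ) : |f x| ≤ 1 := by
    by_cases hx : x = 0 <;> simp [f, hx]
  have hcenter (i : ι) (x : ℝ) :
      (μ i).real {0} - Set.indicator {0} 1 x = f x - ∫ y, f y ∂μ i := by
    rw [integral_neg, integral_indicator_one (measurableSet_singleton 0)]
    ring
  simp only [hcenter]
  exact integral_ciSup_sum_eval_mul_abs_inner_le (ξ := fun i x ↦ f x - ∫ y, f y ∂μ i)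
    (fun _ ↦ hf.sub_const _)
    (fun _ ↦ (memLp_of_abs_le_one hf hf1).sub (memLp_const _))
    (fun _ ↦ integral_sub_integral_self f) (fun _ ↦ integral_sub_integral_sq_le_one hf hf1) a hd

lemma integrable_norm_sign_deviation (a : ι → E) (m : ι → ℝ) :
    Integrable (fun z : ι → ℝ ↦ ‖∑ i, (SignType.sign (z i) - m i) • a i‖) (Measure.pi μ) := by
  have hsign (i : ι) : Integrable (fun x ↦ (SignType.sign x : ℝ)) (μ i) :=
    memLp_one_iff_integrable.1 (memLp_of_abs_le_one measurable_sign_coe abs_sign_coe_le_one)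
  have hdev (i : ι) : Integrable (fun z : ι → ℝ ↦ SignType.sign (z i) - m i) (Measure.pi μ) :=
    (integrable_comp_eval (f := fun x ↦ (SignType.sign x : ℝ)) (hsign i)).sub (integrable_const _)
  exact (integrable_finsetSum _ fun i _ ↦ (hdev i).smul_const (a i)).norm

lemma integral_norm_sign_deviation_le (a : ι → E) :
    ∫ z, ‖∑ i, (SignType.sign (z i) - ∫ x, (SignType.sign x : ℝ) ∂μ i) • a i‖ ∂Measure.pi μ ≤
      √(∑ i, ‖a i‖ ^ 2) :=
  have hmem (i : ι) :=
    memLp_of_abs_le_one (P := μ i) (p := 2) measurable_sign_coe abs_sign_coe_le_one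
  integral_norm_sum_eval_smul_le (ξ := fun i x ↦ SignType.sign x - ∫ y, (SignType.sign y : ℝ) ∂μ i)
    (fun i ↦ (hmem i).sub (memLp_const _)) (fun _ ↦ integral_sub_integral_self _)
    (fun _ ↦ integral_sub_integral_sq_le_one measurable_sign_coe abs_sign_coe_le_one) a

theorem ofReal_le_measure_pi_forall_l1DirDeriv_pos {a : ι → E} {ε S L : ℝ} (hε : 0 ≤ ε)
    (hε1 : ε ≤ 1) (hμ : ∀ i, 1 - ε ≤ (μ i).real {0})
    (hS : ∀ c : ι → ℝ, (∀ i, |c i| ≤ 1) → ‖∑ i, c i • a i‖ ≤ S)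
    (hL : ∀ Δ, ‖Δ‖ = 1 → L ≤ ∑ i, |⟪a i, Δ⟫_ℝ|) (hgap : 0 < (1 - ε) * L - ε * S) :
    ENNReal.ofReal (1 - 3 * √(∑ i, ‖a i‖ ^ 2) / ((1 - ε) * L - ε * S)) ≤
      Measure.pi μ {z | ∀ Δ, ‖Δ‖ = 1 → 0 < l1DirDeriv a z Δ} := by
  obtain ⟨F, hF, hFbad⟩ := exists_finite_set_of_l1DirDeriv_nonpos a
  let J : Type _ := ↥(insert 0 {Δ ∈ F | ‖Δ‖ = 1})
  have : Finite J := ((hF.sep _).insert 0).to_subtype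
  have hJ (j : J) : ‖(j : E)‖ ≤ 1 := by
    obtain h | h := j.2
    · simp [h]
    · exact h.2.le
  let m (i : ι) : ℝ := ∫ x, (SignType.sign x : ℝ) ∂μ i
  let X (z : ι → ℝ) (Δ : E) : ℝ :=
    ∑ i, ((μ i).real {0} - Set.indicator {0} 1 (z i)) * |⟪a i, Δ⟫_ℝ|
  let Y (z : ι → ℝ) : ℝ := ‖∑ i, (SignType.sign (z i) - m i) • a i‖
  have hX (z : ι → ℝ) (j : J) : X z j ≤ ⨆ j : J, X z j :=
    le_ciSup (f := fun j : J ↦ X z j) (Set.finite_range _).bddAbove j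
  have hX0 (z : ι → ℝ) : 0 ≤ ⨆ j : J, X z j := by
    simpa [X] using hX z ⟨0, Set.mem_insert _ _⟩
  have hXint := integrable_ciSup_atom_deviation (μ := μ) a ((↑) : J → E)
  have hYint := integrable_norm_sign_deviation (μ := μ) a m
  have hbias : ‖∑ i, m i • a i‖ ≤ ε * S := norm_sum_smul_le_mul_of_abs_le hS hε fun i ↦
    abs_integral_sign_le.trans (sub_le_comm.1 (hμ i))
  refine ofReal_one_sub_div_le_measure_of_le_integral (hXint.add hYint)
    (fun z ↦ add_nonneg (hX0 z) (norm_nonneg _)) hgap ?_ fun z hz ↦ ?_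
  · refine (integral_add hXint hYint).trans_le ?_
    linarith [integral_ciSup_atom_deviation_le (μ := μ) a hJ,
      integral_norm_sign_deviation_le (μ := μ) a]
  · obtain ⟨Δ, hΔ, hle⟩ : ∃ Δ, ‖Δ‖ = 1 ∧ l1DirDeriv a z Δ ≤ 0 := by simpa using hz
    obtain ⟨Δ', hmem, hΔ', hle'⟩ := hFbad z Δ hΔ hle
    calc (1 - ε) * L - ε * S ≤ X z Δ' + Y z :=
          le_deviation_of_l1DirDeriv_nonpos hΔ' hle' (sub_nonneg.2 hε1) hμ (hL Δ' hΔ') hbias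
      _ ≤ (⨆ j : J, X z j) + Y z := by
          gcongr
          exact hX z ⟨Δ', Set.mem_insert_of_mem _ ⟨hmem, hΔ'⟩⟩

end Recovery
section Coordinates

open scoped InnerProductSpace

lemma sum_norm_sq_le_card_mul_of_unit_bound {ι κ E : Type*} [Fintype ι] [Fintype κ]
    [NormedAddCommGroup E] [InnerProductSpace ℝ E] (b : OrthonormalBasis κ ℝ E) {a : ι → E}
    {M : ℝ} (hM : ∀ Δ, ‖Δ‖ = 1 → ∑ i, ⟪a i, Δ⟫_ℝ ^ 2 ≤ M) :
    ∑ i, ‖a i‖ ^ 2 ≤ Fintype.card κ * M := by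
  calc ∑ i, ‖a i‖ ^ 2 = ∑ i, ∑ j, ⟪a i, b j⟫_ℝ ^ 2 := by
        simp only [← b.sum_sq_inner_left]
    _ = ∑ j, ∑ i, ⟪a i, b j⟫_ℝ ^ 2 := Finset.sum_comm
    _ ≤ ∑ _ : κ, M := Finset.sum_le_sum fun j _ ↦ hM _ (b.norm_eq_one j)
    _ = Fintype.card κ * M := by simp

lemma l2norm_ofLp {n : ℕ} (x : EuclideanSpace ℝ (Fin n)) : l2norm x.ofLp = ‖x‖ := by
  simp [l2norm, EuclideanSpace.norm_eq]

lemma dot_ofLp {n : ℕ} (x y : EuclideanSpace ℝ (Fin n)) : dot x.ofLp y.ofLp = ⟪x, y⟫_ℝ := by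
  simp [dot, PiLp.inner_apply, mul_comm]

variable {k D : ℕ}

lemma norm_sum_smul_toLp_le (hk : 0 < k) {A : Fin k → Fin D → ℝ} {σ : ℝ} (hσ : 0 ≤ σ)
    {c : Fin k → ℝ}
    (hc : l2norm (fun j ↦ (1 / (k : ℝ)) * ∑ i, c i * A i j) ^ 2 ≤ σ ^ 2 * D / k) :
    ‖∑ i, c i • WithLp.toLp 2 (A i)‖ ≤ k * (σ * √(D / k)) := by
  have hk' : (0 : ℝ) < k := Nat.cast_pos.2 hk
  have hvec : (fun j ↦ (1 / (k : ℝ)) * ∑ i, c i * A i j) =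
      ((1 / (k : ℝ)) • ∑ i, c i • WithLp.toLp 2 (A i)).ofLp := by
    ext j
    simp
  rw [hvec, l2norm_ofLp, norm_smul, Real.norm_of_nonneg (by positivity)] at hc
  have hsqrt := Real.le_sqrt_of_sq_le hc
  rw [mul_div_assoc, Real.sqrt_mul (sq_nonneg σ), Real.sqrt_sq hσ] at hsqrt
  rwa [one_div_mul_eq_div, div_le_iff₀' hk'] at hsqrt

lemma sqrt_sum_norm_sq_toLp_le (hk : 0 < k) {A : Fin k → Fin D → ℝ} {lambar : ℝ}
    (hlambar : 0 ≤ lambar)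
    (h : ∀ Δ : Fin D → ℝ, l2norm Δ = 1 →
      (1 / (k : ℝ)) * ∑ i, |dot (A i) Δ| ^ 2 ≤ lambar ^ 2) :
    √(∑ i, ‖WithLp.toLp 2 (A i)‖ ^ 2) ≤ k * (lambar * √(D / k)) := by
  have hk' : (0 : ℝ) < k := Nat.cast_pos.2 hk
  have hunit (Δ : EuclideanSpace ℝ (Fin D)) (hΔ : ‖Δ‖ = 1) :
      ∑ i, ⟪WithLp.toLp 2 (A i), Δ⟫_ℝ ^ 2 ≤ k * lambar ^ 2 := by
    simpa only [← dot_ofLp, sq_abs, one_div_mul_eq_div, div_le_iff₀' hk'] using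
      h Δ.ofLp ((l2norm_ofLp Δ).trans hΔ)
  refine Real.sqrt_le_iff.2 ⟨by positivity, ?_⟩
  calc ∑ i, ‖WithLp.toLp 2 (A i)‖ ^ 2
      ≤ Fintype.card (Fin D) * (k * lambar ^ 2) :=
        sum_norm_sq_le_card_mul_of_unit_bound (EuclideanSpace.basisFun (Fin D) ℝ) hunit
    _ = (k * (lambar * √(D / k))) ^ 2 := by
        rw [mul_pow, mul_pow, Real.sq_sqrt (by positivity), Fintype.card_fin]
        field_simp

lemma mul_le_sum_abs_inner_toLp (hk : 0 < k) {A : Fin k → Fin D → ℝ} {lam : ℝ}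
    {Δ : EuclideanSpace ℝ (Fin D)} (h : lam ≤ (1 / (k : ℝ)) * ∑ i, |dot (A i) Δ.ofLp|) :
    k * lam ≤ ∑ i, |⟪WithLp.toLp 2 (A i), Δ⟫_ℝ| := by
  rw [one_div_mul_eq_div, le_div_iff₀' (Nat.cast_pos.2 hk)] at h
  simpa only [← dot_ofLp] using h

lemma eq_of_sum_abs_residual_le {A : Fin k → Fin D → ℝ} {z : Fin k → ℝ} {u v : Fin D → ℝ}
    (hpos : ∀ Δ, ‖Δ‖ = 1 → 0 < l1DirDeriv (fun i ↦ WithLp.toLp 2 (A i)) z Δ)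
    (hmin : ∑ i, |dot (A i) u + z i - dot (A i) v| ≤ ∑ i, |z i|) : v = u := by
  have hresidual (i : Fin k) : dot (A i) u + z i - dot (A i) v =
      z i - ⟪WithLp.toLp 2 (A i), WithLp.toLp 2 (v - u)⟫_ℝ := by
    rw [← dot_ofLp]
    simp only [dot, Pi.sub_apply, mul_sub, Finset.sum_sub_distrib]
    ring
  have hzero := eq_zero_of_sum_abs_sub_inner_le hpos (v := WithLp.toLp 2 (v - u))
    (by simpa only [hresidual] using hmin)
  simpa [sub_eq_zero] using hzero

end Coordinates

section Mixture

lemma isProbabilityMeasure_mixture {ε : ℝ} (hε : 0 ≤ ε) (hε1 : ε ≤ 1) (Q : Measure ℝ)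
    [IsProbabilityMeasure Q] : IsProbabilityMeasure (mixture ε Q) := by
  refine ⟨?_⟩
  simp only [mixture, Measure.add_apply, Measure.smul_apply, measure_univ, smul_eq_mul, mul_one]
  rw [← ENNReal.ofReal_add (sub_nonneg.2 hε1) hε, sub_add_cancel, ENNReal.ofReal_one]

lemma one_sub_le_mixture_real_zero {ε : ℝ} (Q : Measure ℝ) [IsFiniteMeasure (mixture ε Q)] :
    1 - ε ≤ (mixture ε Q).real {0} := by
  rw [measureReal_def, ← ENNReal.ofReal_le_iff_le_toReal (measure_ne_top _ _)]
  simp [mixture]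

end Mixture

section Ratio

lemma lt_of_four_mul_add_div_lt_one {x y w : ℝ} (hx : 0 ≤ x) (hw : 0 < w)
    (h : 4 * ((x + y) / w) < 1) : y < w := by
  rw [← mul_div_assoc, div_lt_one hw] at h
  linarith

lemma three_mul_div_sub_le_four_mul_add_div {x y w : ℝ} (hx : 0 ≤ x) (hy : 0 ≤ y) (hw : 0 < w)
    (h : 4 * ((x + y) / w) < 1) : 3 * x / (w - y) ≤ 4 * ((x + y) / w) := by
  have hyw : 0 < w - y := sub_pos.2 (lt_of_four_mul_add_div_lt_one hx hw h)
  rw [← mul_div_assoc, div_lt_one hw] at h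
  rw [← mul_div_assoc, div_le_div_iff₀ hyw hw]
  nlinarith [mul_nonneg hx hy, mul_nonneg hy hyw.le]

lemma div_le_div_mul_log_exp_one_mul_div {D k : ℝ} (hD : 0 < D) (hDk : D ≤ k) :
    D / k ≤ D / k * Real.log (Real.exp 1 * k / D) := by
  have hk : 0 < k := hD.trans_le hDk
  refine le_mul_of_one_le_right (by positivity) ?_
  rw [Real.le_log_iff_exp_le (by positivity), le_div_iff₀ hD]
  gcongr

end Ratio

theorem statement_3_general {ε : ℝ} (hε : 0 ≤ ε) (hε1 : ε < 1) {σ lam lambar : ℝ} (hσ : 0 ≤ σ)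
    (hlam : 0 < lam) (hlambar : 0 ≤ lambar) {D k : ℕ} (hk : 0 < k) (A : Fin k → Fin D → ℝ)
    (hC1 : ∀ c : Fin k → ℝ, (∀ i, |c i| ≤ 1) →
      l2norm (fun j ↦ (1 / (k : ℝ)) * ∑ i, c i * A i j) ^ 2 ≤ σ ^ 2 * D / k)
    (hC2 : ∀ Δ : Fin D → ℝ, l2norm Δ = 1 → lam ≤ (1 / (k : ℝ)) * ∑ i, |dot (A i) Δ|)
    (hC3 : ∀ Δ : Fin D → ℝ, l2norm Δ = 1 →
      (1 / (k : ℝ)) * ∑ i, |dot (A i) Δ| ^ 2 ≤ lambar ^ 2)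
    (μ : Fin k → Measure ℝ) [∀ i, IsProbabilityMeasure (μ i)]
    (hμ : ∀ i, 1 - ε ≤ (μ i).real {0}) (ustar : Fin D → ℝ) :
    ENNReal.ofReal (1 - 4 * ((lambar * √(D / k) + ε * σ * √(D / k)) / (lam * (1 - ε)))) ≤
      Measure.pi μ {z | ∀ uhat : Fin D → ℝ,
        (∀ u : Fin D → ℝ, ∑ i, |dot (A i) ustar + z i - dot (A i) uhat| ≤
          ∑ i, |dot (A i) ustar + z i - dot (A i) u|) → uhat = ustar} := by
  have hk' : (0 : ℝ) < k := Nat.cast_pos.2 hk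
  rcases le_or_gt 1 (4 * ((lambar * √(D / k) + ε * σ * √(D / k)) / (lam * (1 - ε)))) with h | h
  · exact (ENNReal.ofReal_of_nonpos (sub_nonpos.2 h)).trans_le zero_le
  have hx : 0 ≤ lambar * √(D / k) := by positivity
  have hy : 0 ≤ ε * σ * √(D / k) := by positivity
  have hw : 0 < lam * (1 - ε) := mul_pos hlam (sub_pos.2 hε1)
  have hgap : 0 < lam * (1 - ε) - ε * σ * √(D / k) :=
    sub_pos.2 (lt_of_four_mul_add_div_lt_one hx hw h)
  have hgap_eq : (1 - ε) * (k * lam) - ε * (k * (σ * √(D / k))) =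
      k * (lam * (1 - ε) - ε * σ * √(D / k)) := by ring
  have hgap_pos : 0 < (1 - ε) * (k * lam) - ε * (k * (σ * √(D / k))) :=
    hgap_eq ▸ mul_pos hk' hgap
  have hrecover := ofReal_le_measure_pi_forall_l1DirDeriv_pos
    (a := fun i ↦ WithLp.toLp 2 (A i)) hε hε1.le hμ
    (fun c hc ↦ norm_sum_smul_toLp_le hk hσ (hC1 c hc))
    (fun Δ hΔ ↦ mul_le_sum_abs_inner_toLp hk (hC2 Δ.ofLp ((l2norm_ofLp Δ).trans hΔ))) hgap_pos
  refine le_trans (ENNReal.ofReal_le_ofReal (sub_le_sub_left ?_ 1)) (hrecover.trans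
    (measure_mono fun z hz uhat hmin ↦ eq_of_sum_abs_residual_le hz (by simpa using hmin ustar)))
  calc 3 * √(∑ i, ‖WithLp.toLp 2 (A i)‖ ^ 2) / ((1 - ε) * (k * lam) - ε * (k * (σ * √(D / k))))
      ≤ 3 * (k * (lambar * √(D / k))) / (k * (lam * (1 - ε) - ε * σ * √(D / k))) := by
        rw [← hgap_eq]
        gcongr
        exact sqrt_sum_norm_sq_toLp_le hk hlambar hC3
    _ = 3 * (lambar * √(D / k)) / (lam * (1 - ε) - ε * σ * √(D / k)) := by
        rw [mul_left_comm, mul_div_mul_left _ _ hk'.ne']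
    _ ≤ _ := three_mul_div_sub_le_four_mul_add_div hx hy hw h

theorem statement_3 (δ : ℝ) (hδ : δ ∈ Set.Ioo (0 : ℝ) 1) :
    ∃ c : ℝ, 0 < c ∧
      ∀ (ε : ℝ), 0 ≤ ε → ε < 1 →
      ∀ (σ lam lambar : ℝ), 0 < σ → 0 < lam → 0 < lambar →
      ∀ (D k : ℕ), 1 ≤ D → D ≤ k →
      ∀ (A : Fin k → Fin D → ℝ),
        -- (C1)
        (∀ cvec : Fin k → ℝ, (∀ i, |cvec i| ≤ 1) →
          l2norm (fun j => (1 / (k : ℝ)) * ∑ i : Fin k, cvec i * A i j) ^ 2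
            ≤ σ ^ 2 * D / k) →
        -- (C2)
        (∀ Δ : Fin D → ℝ, l2norm Δ = 1 →
          lam ≤ (1 / (k : ℝ)) * ∑ i : Fin k, |dot (A i) Δ|) →
        -- (C3)
        (∀ Δ : Fin D → ℝ, l2norm Δ = 1 →
          (1 / (k : ℝ)) * ∑ i : Fin k, |dot (A i) Δ| ^ 2 ≤ lambar ^ 2) →
      ∀ (Q : Fin k → Measure ℝ), (∀ i, IsProbabilityMeasure (Q i)) →
      ∀ (ustar : Fin D → ℝ),
        (lambar * Real.sqrt ((D / (k : ℝ)) * Real.log (Real.exp 1 * k / D))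
            + ε * σ * Real.sqrt (D / (k : ℝ))) / (lam * (1 - ε)) ≤ c →
        ENNReal.ofReal (1 - δ) ≤
          (Measure.pi fun i : Fin k => mixture ε (Q i))
            {z : Fin k → ℝ | ∀ uhat : Fin D → ℝ,
              (∀ u : Fin D → ℝ,
                (∑ i : Fin k, |dot (A i) ustar + z i - dot (A i) uhat|) ≤
                  ∑ i : Fin k, |dot (A i) ustar + z i - dot (A i) u|) →
              uhat = ustar} := by
  refine ⟨δ / 4, by linarith [hδ.1], fun ε hε hε1 σ lam lambar hσ hlam hlambar D k hD hDk A hC1 hC2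
    hC3 Q _ ustar hc ↦ ?_⟩
  have (i : Fin k) := isProbabilityMeasure_mixture hε hε1.le (Q i)
  have hratio : (lambar * √(D / k) + ε * σ * √(D / k)) / (lam * (1 - ε)) ≤ δ / 4 := by
    refine le_trans ?_ hc
    have : 0 < 1 - ε := sub_pos.2 hε1
    gcongr
    exact div_le_div_mul_log_exp_one_mul_div (Nat.cast_pos.2 hD) (Nat.cast_le.2 hDk)
  exact (ENNReal.ofReal_le_ofReal (by linarith)).trans (statement_3_general hε hε1 hσ.le hlam
    hlambar.le (hD.trans hDk) A hC1 hC2 hC3 (fun i ↦ mixture ε (Q i))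
    (fun i ↦ one_sub_le_mixture_real_zero (Q i)) ustar)

end
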